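/- arXiv:0805.0522 — 2 statements merged into one kernel-verified Lean document; each statement's English description precedes it below -/
import Mathlib

section
/- Let d ≥ 2 and let A := {x ∈ ℝ^d : x_d = 0, or (x₁−3)² + x₂² + ⋯ + x_d² ≤ 1, or (x₁² + x₂² + ⋯ + x_d² ≤ 1 and x_d ≥ 0)}. Then A is not elementary closed semi-algebraic: there exist no m ∈ ℕ and polynomials p₁,…,p_m ∈ ℝ[x₁,…,x_d] with A = (p₁,…,p_m)_{≥0}. -/
open MvPolynomial

/-- A nonzero bivariate polynomial is a power of `Y` times a polynomial not divisible by `Y`. -/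
theorem exists_eq_Y_pow_mul {P : Polynomial (Polynomial ℝ)} (hP : P ≠ 0) :
    ∃ (k : ℕ) (Q : Polynomial (Polynomial ℝ)), Q.coeff 0 ≠ 0 ∧ P = Polynomial.X ^ k * Q := by
  obtain ⟨Q, hPQ, hQ⟩ := Polynomial.exists_eq_pow_rootMultiplicity_mul_and_not_dvd P hP 0
  rw [Polynomial.C_0, sub_zero] at hPQ hQ
  exact ⟨_, Q, fun h => hQ (Polynomial.X_dvd_iff.2 h), hPQ⟩

theorem continuous_evalEval_right (Q : Polynomial (Polynomial ℝ)) (u : ℝ) :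
    Continuous fun v : ℝ => Q.evalEval u v := by
  simp only [← Polynomial.map_evalRingHom_eval]
  exact (Q.map (Polynomial.evalRingHom u)).continuous

theorem evalEval_zero_right (Q : Polynomial (Polynomial ℝ)) (u : ℝ) :
    Q.evalEval u 0 = (Q.coeff 0).eval u := by
  simp [Polynomial.evalEval, Polynomial.coeff_zero_eq_eval_zero]

theorem even_of_eventually_nonneg {k : ℕ} {g : ℝ → ℝ} (hg : Continuous g) (h0 : g 0 ≠ 0)
    (h : ∀ᶠ v in nhds (0 : ℝ), 0 ≤ v ^ k * g v) : Even k := by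
  by_contra hk
  rw [Nat.not_even_iff_odd] at hk
  rcases lt_or_gt_of_ne h0 with hneg | hpos
  · have hev : ∀ᶠ v in nhds (0 : ℝ), g v < 0 := hg.continuousAt.eventually_lt_const hneg
    obtain ⟨v, ⟨h1, h2⟩, hv⟩ :=
      (((h.and hev).filter_mono nhdsWithin_le_nhds).and
        (self_mem_nhdsWithin : Set.Ioi (0 : ℝ) ∈ nhdsWithin 0 (Set.Ioi 0))).exists
    have hvk : 0 < v ^ k := pow_pos hv k
    nlinarith
  · have hev : ∀ᶠ v in nhds (0 : ℝ), 0 < g v := hg.continuousAt.eventually_const_lt hpos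
    obtain ⟨v, ⟨h1, h2⟩, hv⟩ :=
      (((h.and hev).filter_mono nhdsWithin_le_nhds).and
        (self_mem_nhdsWithin : Set.Iio (0 : ℝ) ∈ nhdsWithin 0 (Set.Iio 0))).exists
    have hvk : v ^ k < 0 := hk.pow_neg hv
    nlinarith

theorem eventually_nonneg_of_even {k : ℕ} {g : ℝ → ℝ} (hg : Continuous g) (h0 : g 0 ≠ 0)
    (hk : Even k) (h : ∀ᶠ v in nhdsWithin (0 : ℝ) (Set.Ioi 0), 0 ≤ v ^ k * g v) :
    ∀ᶠ v in nhds (0 : ℝ), 0 ≤ v ^ k * g v := by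
  rcases lt_or_gt_of_ne h0 with hneg | hpos
  · have hev : ∀ᶠ v in nhds (0 : ℝ), g v < 0 := hg.continuousAt.eventually_lt_const hneg
    obtain ⟨v, ⟨h1, h2⟩, hv⟩ :=
      ((h.and (hev.filter_mono nhdsWithin_le_nhds)).and self_mem_nhdsWithin).exists
    have hvk : 0 < v ^ k := pow_pos hv k
    nlinarith
  · have hev : ∀ᶠ v in nhds (0 : ℝ), 0 < g v := hg.continuousAt.eventually_const_lt hpos
    filter_upwards [hev] with v hv
    exact mul_nonneg (hk.pow_nonneg v) hv.le

theorem exists_eval_ne_zero_of_infinite {r : Polynomial ℝ} (hr : r ≠ 0) {S : Set ℝ}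
    (hS : S.Infinite) : ∃ u ∈ S, r.eval u ≠ 0 := by
  by_contra! h
  exact hr (Polynomial.eq_zero_of_infinite_isRoot r (hS.mono h))

/-- If a bivariate polynomial is nonnegative on both sides of the `u`-axis near infinitely many
points, then nonnegativity just above a generic point of the axis implies nonnegativity near it. -/
theorem exists_generic_eventually_nonneg (P : Polynomial (Polynomial ℝ)) {S T : Set ℝ}
    (hS : S.Infinite) (hPS : ∀ u ∈ S, ∀ᶠ v in nhds (0 : ℝ), 0 ≤ P.evalEval u v)
    (hPT : ∀ u ∈ T, ∀ᶠ v in nhdsWithin (0 : ℝ) (Set.Ioi 0), 0 ≤ P.evalEval u v) :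
    ∃ r : Polynomial ℝ, r ≠ 0 ∧
      ∀ u ∈ T, r.eval u ≠ 0 → ∀ᶠ v in nhds (0 : ℝ), 0 ≤ P.evalEval u v := by
  rcases eq_or_ne P 0 with rfl | hP
  · exact ⟨1, one_ne_zero, fun u _ _ => by simp⟩
  obtain ⟨k, Q, hQ, rfl⟩ := exists_eq_Y_pow_mul hP
  simp only [Polynomial.evalEval_mul, Polynomial.evalEval_pow, Polynomial.evalEval_X]
    at hPS hPT ⊢
  obtain ⟨u, hu, hQu⟩ := exists_eval_ne_zero_of_infinite hQ hS
  rw [← evalEval_zero_right] at hQu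
  have hk : Even k := even_of_eventually_nonneg (continuous_evalEval_right Q u) hQu (hPS u hu)
  refine ⟨Q.coeff 0, hQ, fun w hw hQw => ?_⟩
  rw [← evalEval_zero_right] at hQw
  exact eventually_nonneg_of_even (continuous_evalEval_right Q w) hQw hk (hPT w hw)

/-- The vector with entry `v` at `b`, entry `u` at `a`, and zero elsewhere. -/
def planePoint {R ι : Type*} [Zero R] [DecidableEq ι] (a b : ι) (u v : R) (i : ι) : R :=
  if i = b then v else if i = a then u else 0

theorem sum_erase_planePoint_sq {ι : Type*} [Fintype ι] [DecidableEq ι] {a b : ι} (hab : a ≠ b)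
    (u v : ℝ) : ∑ i ∈ Finset.univ.erase a, planePoint a b u v i ^ 2 = v ^ 2 := by
  rw [Finset.sum_eq_single_of_mem b (by simp [hab.symm])]
  · simp [planePoint]
  · intro i hi hib
    simp [planePoint, hib, Finset.ne_of_mem_erase hi]

theorem sum_planePoint_sq {ι : Type*} [Fintype ι] [DecidableEq ι] {a b : ι} (hab : a ≠ b)
    (u v : ℝ) : ∑ i, planePoint a b u v i ^ 2 = u ^ 2 + v ^ 2 := by
  rw [← Finset.add_sum_erase _ _ (Finset.mem_univ a), sum_erase_planePoint_sq hab]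
  simp [planePoint, hab]

/-- Restriction of a polynomial to a coordinate plane. -/
theorem exists_evalEval_eq_eval_planePoint {ι : Type*} [DecidableEq ι] (a b : ι)
    (p : MvPolynomial ι ℝ) : ∃ P : Polynomial (Polynomial ℝ),
      ∀ u v : ℝ, P.evalEval u v = eval (planePoint a b u v) p := by
  induction p using MvPolynomial.induction_on with
  | C c => exact ⟨Polynomial.C (Polynomial.C c), fun u v => by simp⟩
  | add p q hp hq =>
    obtain ⟨P, hP⟩ := hp
    obtain ⟨Q, hQ⟩ := hq
    exact ⟨P + Q, fun u v => by simp [Polynomial.evalEval_add, hP, hQ]⟩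
  | mul_X p i hp =>
    obtain ⟨P, hP⟩ := hp
    refine ⟨P * planePoint a b (Polynomial.C Polynomial.X) Polynomial.X i, fun u v => ?_⟩
    rw [Polynomial.evalEval_mul, hP, map_mul, eval_X]
    simp only [planePoint]
    split_ifs <;> simp [Polynomial.evalEval_C]

/-- The set `A = {x ∈ ℝ^d : x_d = 0, or (x₁−3)² + x₂² + ⋯ + x_d² ≤ 1, or
(x₁² + ⋯ + x_d² ≤ 1 and x_d ≥ 0)}` is a closed semi-algebraic set which is not
elementary closed: it admits no representation `A = (p₁,…,p_m)_{≥0}`. -/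
theorem not_elementary_closed
    (d : ℕ) (hd : 2 ≤ d)
    (A : Set (EuclideanSpace ℝ (Fin d)))
    (hA : A = {x : EuclideanSpace ℝ (Fin d) |
      x ⟨d - 1, by omega⟩ = 0 ∨
      (x ⟨0, by omega⟩ - 3) ^ 2
          + ∑ i ∈ Finset.univ.erase (⟨0, by omega⟩ : Fin d), x i ^ 2 ≤ 1 ∨
      ((∑ i, x i ^ 2) ≤ 1 ∧ 0 ≤ x ⟨d - 1, by omega⟩)}) :
    ¬ ∃ (m : ℕ) (p : Fin m → MvPolynomial (Fin d) ℝ),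
        A = {x : EuclideanSpace ℝ (Fin d) | ∀ i, 0 ≤ eval x (p i)} := by
  rintro ⟨m, p, hp⟩
  set a : Fin d := ⟨0, by omega⟩ with ha
  set b : Fin d := ⟨d - 1, by omega⟩ with hb
  have hab : a ≠ b := by
    simp only [ha, hb, ne_eq, Fin.mk.injEq]
    omega
  have plane_iff (u v : ℝ) : (∀ i, 0 ≤ eval (planePoint a b u v) (p i)) ↔
      v = 0 ∨ (u - 3) ^ 2 + v ^ 2 ≤ 1 ∨ (u ^ 2 + v ^ 2 ≤ 1 ∧ 0 ≤ v) := by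
    have h := Set.ext_iff.1 (hp.symm.trans hA) (WithLp.toLp 2 (planePoint a b u v))
    simp only [Set.mem_ofPred_eq, sum_erase_planePoint_sq hab, sum_planePoint_sq hab] at h
    rw [h]
    simp [planePoint, hab]
  choose P hP using fun i => exists_evalEval_eq_eval_planePoint a b (p i)
  have near_disc : ∀ u ∈ Set.Ioo (2 : ℝ) 4, ∀ᶠ v in nhds (0 : ℝ),
      ∀ i, 0 ≤ (P i).evalEval u v := by
    intro u hu
    have hc : ContinuousAt (fun v : ℝ => (u - 3) ^ 2 + v ^ 2) 0 := by fun_prop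
    filter_upwards [hc.eventually_lt_const (u := 1) (by nlinarith [hu.1, hu.2])] with v hv
    simp only [hP]
    exact (plane_iff u v).2 (Or.inr (Or.inl hv.le))
  have near_halfDisc : ∀ u ∈ Set.Ioo (-1 : ℝ) 1, ∀ᶠ v in nhdsWithin (0 : ℝ) (Set.Ioi 0),
      ∀ i, 0 ≤ (P i).evalEval u v := by
    intro u hu
    have hc : ContinuousAt (fun v : ℝ => u ^ 2 + v ^ 2) 0 := by fun_prop
    filter_upwards [(hc.eventually_lt_const (u := 1)
      (by nlinarith [hu.1, hu.2])).filter_mono nhdsWithin_le_nhds, self_mem_nhdsWithin] with v hv hv0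
    simp only [hP]
    exact (plane_iff u v).2 (Or.inr (Or.inr ⟨hv.le, le_of_lt hv0⟩))
  choose r hr0 hr using fun i => exists_generic_eventually_nonneg (P i)
    (Set.Ioo_infinite (by norm_num : (2 : ℝ) < 4))
    (fun u hu => (near_disc u hu).mono fun v hv => hv i)
    (fun u hu => (near_halfDisc u hu).mono fun v hv => hv i)
  obtain ⟨u, hu, hru⟩ := exists_eval_ne_zero_of_infinite
    (Finset.prod_ne_zero_iff.2 fun i (_ : i ∈ Finset.univ) => hr0 i)
    (Set.Ioo_infinite (by norm_num : (-1 : ℝ) < 1))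
  rw [Polynomial.eval_prod, Finset.prod_ne_zero_iff] at hru
  have hall : ∀ᶠ v in nhds (0 : ℝ), ∀ i, 0 ≤ (P i).evalEval u v :=
    Filter.eventually_all.2 fun i => hr i u hu (hru i (Finset.mem_univ i))
  obtain ⟨v, hv, hv0⟩ := ((hall.filter_mono nhdsWithin_le_nhds).and
    (self_mem_nhdsWithin : Set.Iio (0 : ℝ) ∈ nhdsWithin 0 (Set.Iio 0))).exists
  simp only [hP] at hv
  rcases (plane_iff u v).1 hv with h | h | h
  · exact hv0.ne h
  · nlinarith [hu.2, sq_nonneg v]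
  · exact hv0.not_ge h.2
end

section
/- Let d ≥ 2 and let A := {x ∈ ℝ^d : (x₁² + x₂² + ⋯ + x_d² < 1 and x_d > 0), or ((x₁−3)² + x₂² + ⋯ + x_d² < 1 and x_d ≠ 0)}. Then A is not elementary open semi-algebraic: there exist no m ∈ ℕ and polynomials p₁,…,p_m ∈ ℝ[x₁,…,x_d] with A = (p₁,…,p_m)_{>0}. -/
open MvPolynomial

open Filter Topology in
/-- If `t ^ k * q t` is positive for small `t > 0` and `q` is continuous and nonzero at `0`,
then `q 0 > 0`. -/
theorem pos_of_eventually_pow_mul_pos {q : ℝ → ℝ} {k : ℕ} (hq : ContinuousAt q 0) (h0 : q 0 ≠ 0)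
    (h : ∀ᶠ t in 𝓝[>] 0, 0 < t ^ k * q t) : 0 < q 0 := by
  refine lt_of_le_of_ne (ge_of_tendsto (hq.tendsto.mono_left (nhdsWithin_le_nhds (s := Set.Ioi 0))) ?_)
    h0.symm
  filter_upwards [h, self_mem_nhdsWithin] with t ht ht0
  exact ((pos_iff_pos_of_mul_pos ht).1 (pow_pos ht0 k)).le

open Filter Topology in
/-- If `t ^ k * q t` is positive for small `t ≠ 0` and `q` is continuous and nonzero at `0`,
then `k` is even. -/
theorem even_of_eventually_pow_mul_pos {q : ℝ → ℝ} {k : ℕ} (hq : ContinuousAt q 0) (h0 : q 0 ≠ 0)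
    (hr : ∀ᶠ t in 𝓝[>] 0, 0 < t ^ k * q t) (hl : ∀ᶠ t in 𝓝[<] 0, 0 < t ^ k * q t) : Even k := by
  have hpos : ∀ᶠ t in 𝓝[<] (0 : ℝ), 0 < q t :=
    (hq.eventually_const_lt (pos_of_eventually_pow_mul_pos hq h0 hr)).filter_mono
      nhdsWithin_le_nhds
  by_contra hk
  obtain ⟨t, ⟨ht, hqt⟩, ht0⟩ := ((hl.and hpos).and self_mem_nhdsWithin).exists
  have := (Nat.not_even_iff_odd.1 hk).pow_neg ht0
  exact absurd ht (mul_neg_of_neg_of_pos this hqt).not_gt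

open Filter Topology in
/-- If `k` is even and `q` is continuous and positive at `0`, then `t ^ k * q t` is positive for
small `t < 0`. -/
theorem eventually_pow_mul_pos_left {q : ℝ → ℝ} {k : ℕ} (hq : ContinuousAt q 0) (h0 : 0 < q 0)
    (hk : Even k) : ∀ᶠ t in 𝓝[<] 0, 0 < t ^ k * q t := by
  filter_upwards [(hq.eventually_const_lt h0).filter_mono nhdsWithin_le_nhds,
    self_mem_nhdsWithin] with t ht ht0
  exact mul_pos (hk.pow_pos (ne_of_lt ht0)) ht

/-- A finite family of nonzero real polynomials has a common non-root in every interval. -/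
theorem Polynomial.exists_mem_Ioo_forall_eval_ne_zero {ι : Type*} [Fintype ι]
    {r : ι → Polynomial ℝ} (hr : ∀ i, r i ≠ 0) {a b : ℝ} (hab : a < b) :
    ∃ s ∈ Set.Ioo a b, ∀ i, (r i).eval s ≠ 0 := by
  have hprod : ∏ i, r i ≠ 0 := Finset.prod_ne_zero_iff.2 fun i _ => hr i
  obtain ⟨s, hs, hns⟩ :=
    (Set.Ioo_infinite hab).exists_notMem_finset (∏ i, r i).roots.toFinset
  refine ⟨s, hs, fun i hi => hns ?_⟩
  rw [Multiset.mem_toFinset, Polynomial.mem_roots hprod, Polynomial.IsRoot, Polynomial.eval_prod]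
  exact Finset.prod_eq_zero (Finset.mem_univ i) hi

open Filter Topology in
/-- If finitely many bivariate polynomials are positive on both sides of the line `t = 0` along
`s ∈ (a, b)`, and positive just above that line along `s ∈ (a', b')`, then they are also
positive just below it for some `s ∈ (a', b')`. -/
theorem Polynomial.exists_eventually_evalEval_pos_left {ι : Type*} [Fintype ι]
    (P : ι → Polynomial (Polynomial ℝ)) {a b a' b' : ℝ} (hab : a < b) (hab' : a' < b')
    (hr : ∀ s ∈ Set.Ioo a b, ∀ i, ∀ᶠ t in 𝓝[>] 0, 0 < (P i).evalEval s t)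
    (hl : ∀ s ∈ Set.Ioo a b, ∀ i, ∀ᶠ t in 𝓝[<] 0, 0 < (P i).evalEval s t)
    (hr' : ∀ s ∈ Set.Ioo a' b', ∀ i, ∀ᶠ t in 𝓝[>] 0, 0 < (P i).evalEval s t) :
    ∃ s ∈ Set.Ioo a' b', ∀ᶠ t in 𝓝[<] 0, ∀ i, 0 < (P i).evalEval s t := by
  have hfactor : ∀ i, ∃ (k : ℕ) (Q : Polynomial (Polynomial ℝ)),
      P i = Polynomial.X ^ k * Q ∧ Q.coeff 0 ≠ 0 := by
    intro i
    have hne : P i ≠ 0 := by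
      intro h
      obtain ⟨s, hs⟩ := Set.nonempty_Ioo.2 hab
      obtain ⟨t, ht⟩ := (hr s hs i).exists
      simp [h] at ht
    obtain ⟨Q, hQ, hdvd⟩ :=
      Polynomial.exists_eq_pow_rootMultiplicity_mul_and_not_dvd (P i) hne 0
    rw [Polynomial.C_0, sub_zero] at hQ hdvd
    exact ⟨_, Q, hQ, fun h => hdvd (Polynomial.X_dvd_iff.2 h)⟩
  choose k Q hP hQ using hfactor
  have heval : ∀ i s t, (P i).evalEval s t = t ^ k i * (Q i).evalEval s t := by
    intro i s t
    rw [hP, Polynomial.evalEval_mul, Polynomial.evalEval_pow, Polynomial.evalEval_X]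
  have hzero : ∀ i s, (Q i).evalEval s 0 = ((Q i).coeff 0).eval s := by
    intro i s
    rw [Polynomial.evalEval, Polynomial.C_0, Polynomial.coeff_zero_eq_eval_zero]
  have hcont : ∀ i s, ContinuousAt (fun t => (Q i).evalEval s t) 0 := by
    intro i s
    simp only [← Polynomial.map_evalRingHom_eval]
    exact (Polynomial.continuous _).continuousAt
  simp only [heval] at hr hl hr' ⊢
  obtain ⟨s, hs, hQs⟩ := Polynomial.exists_mem_Ioo_forall_eval_ne_zero hQ hab
  obtain ⟨s', hs', hQs'⟩ := Polynomial.exists_mem_Ioo_forall_eval_ne_zero hQ hab'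
  simp only [← hzero] at hQs hQs'
  refine ⟨s', hs', eventually_all.2 fun i => ?_⟩
  exact eventually_pow_mul_pos_left (hcont i s')
    (pos_of_eventually_pow_mul_pos (hcont i s') (hQs' i) (hr' s' hs' i))
    (even_of_eventually_pow_mul_pos (hcont i s) (hQs i) (hr s hs i) (hl s hs i))

/-- The point of `ℝ^σ` with coordinate `s` at `i`, `t` at `j` and `0` elsewhere. -/
noncomputable def coordPlanePoint {σ : Type*} [DecidableEq σ] (i j : σ) (s t : ℝ) :
    EuclideanSpace ℝ σ :=
  WithLp.toLp 2 fun k => if k = i then s else if k = j then t else 0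

theorem sum_sq_coordPlanePoint {σ : Type*} [Fintype σ] [DecidableEq σ] {i j : σ} (hij : i ≠ j)
    (s t : ℝ) : ∑ k, coordPlanePoint i j s t k ^ 2 = s ^ 2 + t ^ 2 := by
  have h : ∀ k, coordPlanePoint i j s t k ^ 2 =
      (if k = i then s ^ 2 else 0) + (if k = j then t ^ 2 else 0) := by
    intro k
    by_cases hi : k = i
    · subst hi
      simp [coordPlanePoint, hij]
    · simp [coordPlanePoint, hi, ite_pow]
  simp [h, Finset.sum_add_distrib]

/-- Restriction of a polynomial to the plane of the coordinates `i` and `j`. -/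
theorem MvPolynomial.exists_evalEval_eq_eval_coordPlanePoint {σ : Type*} [DecidableEq σ] (i j : σ)
    (p : MvPolynomial σ ℝ) : ∃ P : Polynomial (Polynomial ℝ), ∀ s t,
      P.evalEval s t = MvPolynomial.eval (coordPlanePoint i j s t) p := by
  refine ⟨MvPolynomial.aeval (fun k => if k = i then Polynomial.C Polynomial.X
    else if k = j then Polynomial.X else 0) p, fun s t => ?_⟩
  induction p using MvPolynomial.induction_on with
  | C a =>
    rw [MvPolynomial.aeval_C, MvPolynomial.eval_C, IsScalarTower.algebraMap_apply ℝ (Polynomial ℝ)]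
    simp [Polynomial.evalEval_C]
  | add p q hp hq => simp only [map_add, Polynomial.evalEval_add, hp, hq]
  | mul_X p k hp =>
    simp only [map_mul, Polynomial.evalEval_mul, hp, MvPolynomial.aeval_X, MvPolynomial.eval_X,
      coordPlanePoint]
    congr 1
    split_ifs <;> simp [Polynomial.evalEval_C]

open Filter Topology in
/-- The set `A = {x ∈ ℝ^d : (x₁² + ⋯ + x_d² < 1 and x_d > 0), or
((x₁−3)² + x₂² + ⋯ + x_d² < 1 and x_d ≠ 0)}` is an open semi-algebraic set which is not
elementary open: it admits no representation `A = (p₁,…,p_m)_{>0}`. -/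
theorem not_elementary_open
    (d : ℕ) (hd : 2 ≤ d)
    (A : Set (EuclideanSpace ℝ (Fin d)))
    (hA : A = {x : EuclideanSpace ℝ (Fin d) |
      ((∑ i, x i ^ 2) < 1 ∧ 0 < x ⟨d - 1, by omega⟩) ∨
      ((x ⟨0, by omega⟩ - 3) ^ 2
          + ∑ i ∈ Finset.univ.erase (⟨0, by omega⟩ : Fin d), x i ^ 2 < 1 ∧
        x ⟨d - 1, by omega⟩ ≠ 0)}) :
    ¬ ∃ (m : ℕ) (p : Fin m → MvPolynomial (Fin d) ℝ),
        A = {x : EuclideanSpace ℝ (Fin d) | ∀ i, 0 < eval x (p i)} := by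
  rintro ⟨m, p, hp⟩
  set a : Fin d := ⟨0, by omega⟩
  set l : Fin d := ⟨d - 1, by omega⟩
  have hal : a ≠ l := by
    simp only [a, l, ne_eq, Fin.mk.injEq]
    omega
  have hmem : ∀ s t : ℝ, coordPlanePoint a l s t ∈ A ↔
      (s ^ 2 + t ^ 2 < 1 ∧ 0 < t) ∨ ((s - 3) ^ 2 + t ^ 2 < 1 ∧ t ≠ 0) := by
    intro s t
    have ha : coordPlanePoint a l s t a = s := by simp [coordPlanePoint]
    have hl : coordPlanePoint a l s t l = t := by simp [coordPlanePoint, hal.symm]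
    have hsum := sum_sq_coordPlanePoint hal s t
    have herase := Finset.add_sum_erase Finset.univ
      (fun k => coordPlanePoint a l s t k ^ 2) (Finset.mem_univ a)
    simp only [hsum, ha, add_right_inj] at herase
    rw [hA, Set.mem_ofPred_eq, hsum, herase, ha, hl]
  choose P hP using fun i => exists_evalEval_eq_eval_coordPlanePoint a l (p i)
  have hpos : ∀ s t : ℝ, coordPlanePoint a l s t ∈ A ↔ ∀ i, 0 < (P i).evalEval s t := by
    intro s t
    simp only [hp, hP, Set.mem_ofPred_eq]
  have hnear : ∀ᶠ t in 𝓝 (0 : ℝ), t ∈ Set.Ioo (-1 / 2) (1 / 2) :=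
    Ioo_mem_nhds (by norm_num) (by norm_num)
  have hright := hnear.filter_mono (nhdsWithin_le_nhds (s := Set.Ioi 0))
  have hleft := hnear.filter_mono (nhdsWithin_le_nhds (s := Set.Iio 0))
  obtain ⟨s, hs, hneg⟩ := Polynomial.exists_eventually_evalEval_pos_left P
    (a := 5 / 2) (b := 7 / 2) (a' := -1 / 2) (b' := 1 / 2) (by norm_num) (by norm_num)
    (fun s hs i => by
      filter_upwards [hright, self_mem_nhdsWithin] with t ht ht0
      refine (hpos s t).1 ((hmem s t).2 (Or.inr ⟨?_, ne_of_gt ht0⟩)) i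
      nlinarith [hs.1, hs.2, ht.1, ht.2])
    (fun s hs i => by
      filter_upwards [hleft, self_mem_nhdsWithin] with t ht ht0
      refine (hpos s t).1 ((hmem s t).2 (Or.inr ⟨?_, ne_of_lt ht0⟩)) i
      nlinarith [hs.1, hs.2, ht.1, ht.2])
    (fun s hs i => by
      filter_upwards [hright, self_mem_nhdsWithin] with t ht ht0
      refine (hpos s t).1 ((hmem s t).2 (Or.inl ⟨?_, ht0⟩)) i
      nlinarith [hs.1, hs.2, ht.1, ht.2])
  obtain ⟨t, ht, ht0⟩ := (hneg.and self_mem_nhdsWithin).exists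
  rcases (hmem s t).1 ((hpos s t).2 ht) with ⟨-, h⟩ | ⟨h, -⟩
  · exact lt_asymm h ht0
  · nlinarith [hs.1, hs.2, sq_nonneg t]
end
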